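/- Let k be a field of characteristic p > 0 and let F ∈ k[X_1,…,X_n] be a p-polynomial such that for some index i₀ the degree of F in X_{i₀} equals p^{N_{i₀}} for some N_{i₀} ≥ 0. Let A be a commutative k-algebra and let g ∈ A[X_1,…,X_n]. Denote by g(X), g(X'), F(X), F(X') the images of g and F in A[X_1,…,X_n, X'_1,…,X'_n] under the two coordinate inclusions, and by g(X+X') the result of substituting X_i + X'_i for X_i in g. If g(X+X') − g(X) − g(X') lies in the ideal of A[X_1,…,X_n, X'_1,…,X'_n] generated by F(X) and F(X'), then there exists a unique p-polynomial G ∈ A[X_1,…,X_n] with deg_{X_{i₀}}(G) < p^{N_{i₀}} such that g − G lies in the ideal of A[X_1,…,X_n] generated by F. -/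

import Mathlib

open MvPolynomial

/-- A `p`-polynomial over a commutative ring `A` is a polynomial in `A[X_1, …, X_n]`
that is an `A`-linear combination of the monomials `X i ^ p ^ j`. -/
def IsPPolynomial {A : Type*} [CommRing A] (p : ℕ) {n : ℕ}
    (F : MvPolynomial (Fin n) A) : Prop :=
  F ∈ Submodule.span A {g : MvPolynomial (Fin n) A | ∃ i : Fin n, ∃ j : ℕ, g = X i ^ p ^ j}

/-!
Dividing `g` by `F` with respect to `X i₀` replaces it by its remainder `G`, of degree less than
`p ^ N₀`; since `F` is additive, `G(X+X') - G(X) - G(X')` still lies in the ideal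
`(F(X), F(X'))`. But its degrees in `X i₀` and `X' i₀` are both less than `p ^ N₀`, and `F(X)`,
`F(X')` have these variables to the power `p ^ N₀` as leading terms, so it vanishes. Hence `G` is
additive, and additive polynomials in characteristic `p` are `p`-polynomials, because the
binomial coefficients `e.choose b` with `0 < b < e` are all divisible by `p` only for `e` a power
of `p`.
-/

section UnitLeadingTerm

variable {σ τ A B : Type*} [CommRing A] [CommRing B] {i : σ} {q : ℕ}

/-- `F` has leading term `u * X i ^ q` as a polynomial in `X i`, for a unit `u` of the base ring.
As the remaining terms have smaller degree in `X i`, this forces `0 < q`. -/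
def HasUnitLeadingTerm (F : MvPolynomial σ A) (i : σ) (q : ℕ) : Prop :=
  ∃ u : Aˣ, (F - C (u : A) * X i ^ q).degreeOf i < q

/-- Polynomials in the `X j` regarded as polynomials in the single variable `X i`, with
coefficients in the polynomial ring in the other variables; this gives access to the division
with remainder of `Polynomial`. -/
noncomputable def univariateEquiv [DecidableEq σ] (A : Type*) [CommRing A] (i : σ) :
    MvPolynomial σ A ≃ₐ[A] Polynomial (MvPolynomial {j // j ≠ i} A) :=
  (renameEquiv A (Equiv.optionSubtypeNe i).symm).trans (optionEquivLeft A _)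

theorem natDegree_univariateEquiv [DecidableEq σ] (i : σ) (F : MvPolynomial σ A) :
    (univariateEquiv A i F).natDegree = F.degreeOf i :=
  (degreeOf_eq_natDegree i F).symm

theorem univariateEquiv_X_self [DecidableEq σ] (i : σ) :
    univariateEquiv A i (X i) = Polynomial.X := by
  simp [univariateEquiv]

theorem degreeOf_map_le (f : A →+* B) (i : σ) (F : MvPolynomial σ A) :
    (map f F).degreeOf i ≤ F.degreeOf i := by
  classical
  rw [degreeOf_eq_sup, degreeOf_eq_sup]
  exact Finset.sup_mono (support_map_subset f F)

namespace HasUnitLeadingTerm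

theorem pos {F : MvPolynomial σ A} (hF : HasUnitLeadingTerm F i q) : 0 < q :=
  hF.elim fun _ hu ↦ Nat.zero_lt_of_lt hu

theorem map (f : A →+* B) {F : MvPolynomial σ A} (hF : HasUnitLeadingTerm F i q) :
    HasUnitLeadingTerm (MvPolynomial.map f F) i q := by
  obtain ⟨u, hu⟩ := hF
  refine ⟨Units.map f u, ?_⟩
  have hmap : MvPolynomial.map f F - C (f u) * X i ^ q =
      MvPolynomial.map f (F - C (u : A) * X i ^ q) := by simp
  exact hmap ▸ (degreeOf_map_le f i _).trans_lt hu

theorem rename {f : σ → τ} (hf : Function.Injective f) {F : MvPolynomial σ A}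
    (hF : HasUnitLeadingTerm F i q) : HasUnitLeadingTerm (MvPolynomial.rename f F) (f i) q := by
  obtain ⟨u, hu⟩ := hF
  refine ⟨u, ?_⟩
  have hrename : MvPolynomial.rename f F - C (u : A) * X (f i) ^ q =
      MvPolynomial.rename f (F - C (u : A) * X i ^ q) := by simp
  rwa [hrename, degreeOf_rename_of_injective hf]

theorem exists_associated_monic [Nontrivial A] [DecidableEq σ] {F : MvPolynomial σ A}
    (hF : HasUnitLeadingTerm F i q) :
    ∃ P, Associated (univariateEquiv A i F) P ∧ P.Monic ∧ P.natDegree = q := by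
  obtain ⟨u, hu⟩ := hF
  set R := C (↑u⁻¹ : A) * (F - C (u : A) * X i ^ q) with hR
  have hRdeg : (univariateEquiv A i R).degree < q := by
    refine Polynomial.degree_le_natDegree.trans_lt (Nat.cast_lt.mpr ?_)
    rw [natDegree_univariateEquiv]
    exact (degreeOf_C_mul_le _ _ _).trans_lt hu
  have hFu : F * C (↑u⁻¹ : A) = X i ^ q + R := by
    rw [hR, mul_sub, ← mul_assoc, ← C_mul, Units.inv_mul, C_1]
    ring
  have hunit : IsUnit (univariateEquiv A i (C (↑u⁻¹ : A))) := (u⁻¹.isUnit.map C).map _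
  refine ⟨Polynomial.X ^ q + univariateEquiv A i R, ⟨hunit.unit, ?_⟩,
    Polynomial.monic_X_pow_add hRdeg,
    (Polynomial.natDegree_add_eq_left_of_degree_lt (by simpa using hRdeg)).trans
      (Polynomial.natDegree_X_pow q)⟩
  rw [IsUnit.unit_spec, ← map_mul, hFu, map_add, map_pow, univariateEquiv_X_self]

theorem exists_dvd_sub_degreeOf_lt {F : MvPolynomial σ A} (hF : HasUnitLeadingTerm F i q)
    (g : MvPolynomial σ A) : ∃ r, F ∣ g - r ∧ r.degreeOf i < q := by
  classical
  rcases subsingleton_or_nontrivial A with _ | _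
  · exact ⟨0, by simp [Subsingleton.elim g 0], by simpa using hF.pos⟩
  have hq := hF.pos
  obtain ⟨P, hFP, hP, rfl⟩ := hF.exists_associated_monic
  refine ⟨(univariateEquiv A i).symm (univariateEquiv A i g %ₘ P), ?_, ?_⟩
  · rw [← map_dvd_iff (univariateEquiv A i), hFP.dvd_iff_dvd_left, map_sub,
      AlgEquiv.apply_symm_apply]
    exact ⟨_, sub_eq_of_eq_add' (Polynomial.modByMonic_add_div _ P).symm⟩
  · rw [← natDegree_univariateEquiv, AlgEquiv.apply_symm_apply]
    refine Polynomial.natDegree_modByMonic_lt _ hP ?_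
    rintro rfl
    simp at hq

theorem eq_zero_of_dvd_of_degreeOf_lt {F D : MvPolynomial σ A} (hF : HasUnitLeadingTerm F i q)
    (hdvd : F ∣ D) (hD : D.degreeOf i < q) : D = 0 := by
  classical
  nontriviality A
  obtain ⟨P, hFP, hP, rfl⟩ := hF.exists_associated_monic
  rw [← map_dvd_iff (univariateEquiv A i), hFP.dvd_iff_dvd_left] at hdvd
  by_contra hD0
  refine hP.not_dvd_of_natDegree_lt ?_ ?_ hdvd
  · rwa [ne_eq, map_eq_zero_iff _ (univariateEquiv A i).injective]
  · rwa [natDegree_univariateEquiv]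

theorem eq_zero_of_mem_span_pair {F F' D : MvPolynomial σ A} {i' : σ} {q' : ℕ}
    (hF : HasUnitLeadingTerm F i q) (hF' : HasUnitLeadingTerm F' i' q')
    (hFi' : F.degreeOf i' = 0) (hD : D ∈ Ideal.span {F, F'}) (hDi : D.degreeOf i < q)
    (hDi' : D.degreeOf i' < q') : D = 0 := by
  obtain ⟨a, b, hab⟩ := Ideal.mem_span_pair.mp hD
  obtain ⟨r, hr, hri'⟩ := hF'.exists_dvd_sub_degreeOf_lt a
  have hdvd : F' ∣ D - r * F := by
    have hsplit : D - r * F = (a - r) * F + b * F' := by rw [← hab]; ring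
    exact hsplit ▸ (hr.mul_right F).add (dvd_mul_left F' b)
  have hdeg : (D - r * F).degreeOf i' < q' := by
    have hrF : (r * F).degreeOf i' ≤ r.degreeOf i' := by simpa [hFi'] using degreeOf_mul_le i' r F
    exact (degreeOf_sub_le i' D _).trans_lt (max_lt hDi' (hrF.trans_lt hri'))
  have hDrF : D = r * F := sub_eq_zero.mp (hF'.eq_zero_of_dvd_of_degreeOf_lt hdvd hdeg)
  exact hF.eq_zero_of_dvd_of_degreeOf_lt (hDrF ▸ dvd_mul_left F r) hDi

end HasUnitLeadingTerm

end UnitLeadingTerm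

section AdditivityDefect

variable {σ τ A : Type*} [CommRing A]

/-- The polynomial `g(X+X') - g(X) - g(X')`, where the variables `X` and `X'` are indexed by the
left and right summand of `σ ⊕ σ`; its vanishing says that `g` is additive. -/
noncomputable def additivityDefect : MvPolynomial σ A →ₗ[A] MvPolynomial (σ ⊕ σ) A :=
  (aeval fun i ↦ X (Sum.inl i) + X (Sum.inr i)).toLinearMap
    - (rename Sum.inl).toLinearMap - (rename Sum.inr).toLinearMap

theorem additivityDefect_apply (g : MvPolynomial σ A) :
    additivityDefect g = aeval (fun i ↦ (X (Sum.inl i) + X (Sum.inr i) : MvPolynomial (σ ⊕ σ) A)) g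
      - rename Sum.inl g - rename Sum.inr g :=
  rfl

theorem aeval_sumElim_additivityDefect {B : Type*} [CommRing B] [Algebra A B] (x y : σ → B)
    (g : MvPolynomial σ A) :
    aeval (Sum.elim x y) (additivityDefect g) = aeval (x + y) g - aeval x g - aeval y g := by
  rw [additivityDefect_apply, map_sub, map_sub, aeval_rename, aeval_rename, comp_aeval_apply]
  simp [← Pi.add_def]

theorem aeval_add_of_additive {B : Type*} [CommRing B] [Algebra A B] {G : MvPolynomial σ A}
    (hG : additivityDefect G = 0) (x y : σ → B) : aeval (x + y) G = aeval x G + aeval y G := by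
  have h := aeval_sumElim_additivityDefect x y G
  rwa [hG, map_zero, eq_comm, sub_sub, sub_eq_zero] at h

theorem additivityDefect_mem_span_of_dvd {F g : MvPolynomial σ A} (hF : additivityDefect F = 0)
    (hg : F ∣ g) : additivityDefect g ∈ Ideal.span {rename Sum.inl F, rename Sum.inr F} := by
  obtain ⟨Q, rfl⟩ := hg
  rw [additivityDefect_apply, sub_sub, sub_eq_zero] at hF
  rw [additivityDefect_apply, map_mul, map_mul, map_mul, hF, Ideal.mem_span_pair]
  set Q' := aeval (fun i ↦ (X (Sum.inl i) + X (Sum.inr i) : MvPolynomial (σ ⊕ σ) A)) Q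
  exact ⟨Q' - rename Sum.inl Q, Q' - rename Sum.inr Q, by ring⟩

theorem degreeOf_aeval_le {s : σ} {t : τ} {f : σ → MvPolynomial τ A}
    (hf : ∀ j ≠ s, (f j).degreeOf t = 0) (g : MvPolynomial σ A) :
    (aeval f g).degreeOf t ≤ g.degreeOf s * (f s).degreeOf t := by
  rw [aeval_def, eval₂_eq]
  refine (degreeOf_sum_le _ _ _).trans (Finset.sup_le fun m hm ↦ ?_)
  calc (C (coeff m g) * ∏ j ∈ m.support, f j ^ m j).degreeOf t
      ≤ (∏ j ∈ m.support, f j ^ m j).degreeOf t := degreeOf_C_mul_le _ _ _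
    _ ≤ ∑ j ∈ m.support, (f j ^ m j).degreeOf t := degreeOf_prod_le _ _ _
    _ ≤ ∑ j ∈ m.support, m j * (f j).degreeOf t :=
        Finset.sum_le_sum fun j _ ↦ degreeOf_pow_le _ _ _
    _ = m s * (f s).degreeOf t :=
        Finset.sum_eq_single s (fun j _ hj ↦ by simp [hf j hj]) fun hs ↦ by
          simp [Finsupp.notMem_support_iff.mp hs]
    _ ≤ g.degreeOf s * (f s).degreeOf t :=
        Nat.mul_le_mul_right _ (monomial_le_degreeOf s hm)

theorem degreeOf_rename_of_notMem_range {f : σ → τ} {t : τ} (ht : t ∉ Set.range f)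
    (g : MvPolynomial σ A) : (rename f g).degreeOf t = 0 := by
  classical
  by_contra hdeg
  have hvars := vars_rename f g (mem_vars_iff_degreeOf_ne_zero.mpr hdeg)
  obtain ⟨j, -, hj⟩ := Finset.mem_image.mp hvars
  exact ht ⟨j, hj⟩

theorem degreeOf_rename_le_of_leftInverse {f : σ → τ} {r : τ → σ} (hr : Function.LeftInverse r f)
    (t : τ) (g : MvPolynomial σ A) : (rename f g).degreeOf t ≤ g.degreeOf (r t) := by
  by_cases ht : t ∈ Set.range f
  · obtain ⟨j, rfl⟩ := ht
    rw [hr j, degreeOf_rename_of_injective hr.injective]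
  · simp [degreeOf_rename_of_notMem_range ht]

theorem degreeOf_additivityDefect_le (s : σ ⊕ σ) (g : MvPolynomial σ A) :
    (additivityDefect g).degreeOf s ≤ g.degreeOf (s.elim id id) := by
  classical
  rcases subsingleton_or_nontrivial A with _ | _
  · simp [Subsingleton.elim g 0]
  have hX (j : σ) : (X (Sum.inl j) + X (Sum.inr j) : MvPolynomial (σ ⊕ σ) A).degreeOf s ≤
      if j = s.elim id id then 1 else 0 := by
    refine (degreeOf_add_le _ _ _).trans ?_
    by_cases h : s.elim id id = j <;> rcases s with i | i <;> simp_all [degreeOf_X, eq_comm]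
  have haeval : (aeval (fun j ↦ (X (Sum.inl j) + X (Sum.inr j) : MvPolynomial (σ ⊕ σ) A))
      g).degreeOf s ≤ g.degreeOf (s.elim id id) :=
    (degreeOf_aeval_le (fun j hj ↦ by simpa [hj] using hX j) g).trans
      (mul_le_of_le_one_right' (by simpa using hX (s.elim id id)))
  exact (degreeOf_sub_le _ _ _).trans (max_le ((degreeOf_sub_le _ _ _).trans (max_le haeval
    (degreeOf_rename_le_of_leftInverse (fun _ ↦ rfl) s g)))
    (degreeOf_rename_le_of_leftInverse (fun _ ↦ rfl) s g))

end AdditivityDefect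

section Additive

open scoped Polynomial

variable {σ A : Type*} [CommRing A]

theorem coeff_aeval_X_add_C_X (f : A[X]) (b : ℕ) :
    (Polynomial.aeval (Polynomial.X + Polynomial.C Polynomial.X : A[X][X]) f).coeff b =
      Polynomial.hasseDeriv b f := by
  have htaylor : Polynomial.aeval (Polynomial.X + Polynomial.C Polynomial.X) f =
      Polynomial.taylor Polynomial.X (f.map Polynomial.C) := by
    rw [Polynomial.taylor_apply, Polynomial.comp, Polynomial.eval₂_map]
    rfl
  have hmap : Polynomial.hasseDeriv b (f.map Polynomial.C) =
      (Polynomial.hasseDeriv b f).map (Polynomial.C : A →+* A[X]) := by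
    ext1 m
    simp only [Polynomial.hasseDeriv_coeff, Polynomial.coeff_map, map_mul, map_natCast]
  rw [htaylor, Polynomial.taylor_coeff, hmap, Polynomial.eval_map, Polynomial.eval₂_C_X]

theorem hasseDeriv_of_additive {f : A[X]}
    (hf : Polynomial.aeval (Polynomial.X + Polynomial.C Polynomial.X : A[X][X]) f =
      Polynomial.aeval Polynomial.X f + Polynomial.aeval (Polynomial.C Polynomial.X) f) (b : ℕ) :
    Polynomial.hasseDeriv b f = Polynomial.C (f.coeff b) + (Polynomial.C f).coeff b := by
  have hX : Polynomial.aeval (Polynomial.X : A[X][X]) f = f.map Polynomial.C := rfl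
  have hC : Polynomial.aeval (Polynomial.C Polynomial.X : A[X][X]) f = Polynomial.C f := by
    rw [← Polynomial.algebraMap_eq, Polynomial.aeval_algebraMap_apply,
      Polynomial.aeval_X_left_apply]
  rw [← coeff_aeval_X_add_C_X, hf, hX, hC, Polynomial.coeff_add, Polynomial.coeff_map]

theorem exists_eq_prime_pow_of_additive (p : ℕ) [Fact p.Prime] [CharP A p] {f : A[X]}
    (hf : Polynomial.aeval (Polynomial.X + Polynomial.C Polynomial.X : A[X][X]) f =
      Polynomial.aeval Polynomial.X f + Polynomial.aeval (Polynomial.C Polynomial.X) f)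
    {e : ℕ} (he : f.coeff e ≠ 0) : ∃ j, e = p ^ j := by
  have hpos : 0 < e := by
    refine Nat.pos_of_ne_zero ?_
    rintro rfl
    have h := hasseDeriv_of_additive hf 0
    rw [Polynomial.hasseDeriv_zero', Polynomial.coeff_C_zero, right_eq_add,
      Polynomial.C_eq_zero] at h
    exact he h
  refine ⟨_, Choose.eq_pow_multiplicity_of_choose_modEq_zero_nat (p := p) hpos fun b hb ↦ ?_⟩
  obtain ⟨hb1, hbe⟩ := Finset.mem_Icc.mp hb
  rw [Nat.modEq_zero_iff_dvd]
  by_contra hndvd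
  have hunit : IsUnit ((e.choose b : ℕ) : A) := (CharP.isUnit_natCast_iff Fact.out).mpr hndvd
  have hcoeff : (e.choose b : A) * f.coeff e = 0 := by
    have h := congrArg (Polynomial.coeff · (e - b)) (hasseDeriv_of_additive hf b)
    rwa [Polynomial.coeff_C_of_ne_zero (by omega), add_zero, Polynomial.hasseDeriv_coeff,
      Nat.sub_add_cancel (by omega), Polynomial.coeff_C_of_ne_zero (by omega)] at h
  exact he (hunit.mul_right_eq_zero.mp hcoeff)

theorem eq_sum_aeval_single_of_additive [Fintype σ] [DecidableEq σ] {G : MvPolynomial σ A}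
    (hG : additivityDefect G = 0) :
    G = ∑ i, aeval (Pi.single i (X i) : σ → MvPolynomial σ A) G := by
  let φ : (σ → MvPolynomial σ A) →+ MvPolynomial σ A :=
    AddMonoidHom.mk' (fun x ↦ aeval x G) (aeval_add_of_additive hG)
  calc G = φ (∑ i, Pi.single i (X i)) := by
        rw [Finset.univ_sum_single]
        exact (aeval_X_left_apply G).symm
    _ = ∑ i, φ (Pi.single i (X i)) := map_sum φ _ _

theorem aeval_aeval_single_X [DecidableEq σ] {B : Type*} [CommRing B] [Algebra A B]
    (G : MvPolynomial σ A) (i : σ) (x : B) :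
    Polynomial.aeval x (aeval (Pi.single i Polynomial.X : σ → Polynomial A) G) =
      aeval (Pi.single i x : σ → B) G := by
  rw [comp_aeval_apply]
  congr 2 with j
  rcases eq_or_ne j i with rfl | h
  · simp
  · simp [h]

end Additive

section PPolynomial

variable {A B : Type*} [CommRing A] [CommRing B] {p n : ℕ}

theorem isPPolynomial_iff_support_subset {F : MvPolynomial (Fin n) A} :
    IsPPolynomial p F ↔
      (F.support : Set (Fin n →₀ ℕ)) ⊆ {m | ∃ i j, m = Finsupp.single i (p ^ j)} := by
  rw [IsPPolynomial, ← mem_restrictSupport_iff (R := A), restrictSupport_eq_span]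
  congr! 2
  ext g
  constructor
  · rintro ⟨i, j, rfl⟩
    exact ⟨_, ⟨i, j, rfl⟩, X_pow_eq_monomial.symm⟩
  · rintro ⟨_, ⟨i, j, rfl⟩, rfl⟩
    exact ⟨i, j, X_pow_eq_monomial.symm⟩

namespace IsPPolynomial

theorem map (f : A →+* B) {F : MvPolynomial (Fin n) A} (hF : IsPPolynomial p F) :
    IsPPolynomial p (MvPolynomial.map f F) :=
  isPPolynomial_iff_support_subset.mpr
    ((Finset.coe_subset.mpr (support_map_subset f F)).trans
      (isPPolynomial_iff_support_subset.mp hF))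

theorem eq_single_of_mem_support {F : MvPolynomial (Fin n) A} (hF : IsPPolynomial p F)
    {m : Fin n →₀ ℕ} (hm : m ∈ F.support) {i : Fin n} (hmi : m i ≠ 0) :
    m = Finsupp.single i (m i) := by
  obtain ⟨i', j, rfl⟩ := isPPolynomial_iff_support_subset.mp hF hm
  obtain rfl : i' = i := by
    by_contra h
    exact hmi (Finsupp.single_eq_of_ne' h)
  rw [Finsupp.single_eq_same]

theorem hasUnitLeadingTerm {F : MvPolynomial (Fin n) A} (hF : IsPPolynomial p F) {i : Fin n}
    (hpos : 0 < F.degreeOf i) (hu : IsUnit (coeff (Finsupp.single i (F.degreeOf i)) F)) :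
    HasUnitLeadingTerm F i (F.degreeOf i) := by
  obtain ⟨u, hu⟩ := hu
  refine ⟨u, (degreeOf_lt_iff hpos).mpr fun m hm ↦ ?_⟩
  rw [mem_support_iff, hu, C_mul_X_pow_eq_monomial, coeff_sub, coeff_monomial] at hm
  split_ifs at hm with h
  · exact absurd (h ▸ sub_self _) hm
  · rw [sub_zero, ← mem_support_iff] at hm
    refine (monomial_le_degreeOf i hm).lt_of_ne fun hmi ↦ h ?_
    rw [← hmi, ← hF.eq_single_of_mem_support hm (by omega)]

theorem coeff_single_degreeOf_ne_zero {F : MvPolynomial (Fin n) A} (hF : IsPPolynomial p F)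
    {i : Fin n} (hpos : 0 < F.degreeOf i) : coeff (Finsupp.single i (F.degreeOf i)) F ≠ 0 := by
  classical
  have hF0 : F ≠ 0 := ne_zero_of_degreeOf_ne_zero hpos.ne'
  obtain ⟨m, hm, hmi⟩ := Finset.exists_mem_eq_sup F.support
    (support_nonempty.mpr hF0) (fun s ↦ s i)
  rw [← degreeOf_eq_sup] at hmi
  rw [hmi, ← hF.eq_single_of_mem_support hm (by omega)]
  exact mem_support_iff.mp hm

theorem additivityDefect_eq_zero [Fact p.Prime] [CharP A p] {F : MvPolynomial (Fin n) A}
    (hF : IsPPolynomial p F) : additivityDefect F = 0 := by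
  refine (Submodule.span_le (p := LinearMap.ker additivityDefect)).mpr ?_ hF
  rintro _ ⟨i, j, rfl⟩
  simp [additivityDefect_apply, add_pow_char_pow]

end IsPPolynomial

theorem isPPolynomial_of_additivityDefect_eq_zero [Fact p.Prime] [CharP A p]
    {G : MvPolynomial (Fin n) A} (hG : additivityDefect G = 0) : IsPPolynomial p G := by
  rw [eq_sum_aeval_single_of_additive hG]
  refine Submodule.sum_mem _ fun i _ ↦ ?_
  set f : Polynomial A := aeval (Pi.single i Polynomial.X) G with hf
  have hadd : Polynomial.aeval (Polynomial.X + Polynomial.C Polynomial.X) f =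
      Polynomial.aeval (Polynomial.X : Polynomial (Polynomial A)) f +
        Polynomial.aeval (Polynomial.C Polynomial.X) f := by
    simp only [hf, aeval_aeval_single_X, Pi.single_add, aeval_add_of_additive hG]
  rw [← aeval_aeval_single_X, Polynomial.aeval_eq_sum_range]
  refine Submodule.sum_mem _ fun e _ ↦ ?_
  by_cases he : f.coeff e = 0
  · rw [he, zero_smul]
    exact Submodule.zero_mem _
  · obtain ⟨j, rfl⟩ := exists_eq_prime_pow_of_additive p hadd he
    exact Submodule.smul_mem _ _ (Submodule.subset_span ⟨i, j, rfl⟩)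

theorem isPPolynomial_iff_additivityDefect_eq_zero [Fact p.Prime] (hp : (p : A) = 0)
    {G : MvPolynomial (Fin n) A} : IsPPolynomial p G ↔ additivityDefect G = 0 := by
  rcases subsingleton_or_nontrivial A with _ | _
  · exact iff_of_true (Subsingleton.elim 0 G ▸ Submodule.zero_mem _) (Subsingleton.elim _ _)
  have : CharP A p := (CharP.charP_iff_prime_eq_zero Fact.out).mpr hp
  exact ⟨IsPPolynomial.additivityDefect_eq_zero, isPPolynomial_of_additivityDefect_eq_zero⟩

end PPolynomial

theorem hom_from_vanishing_locus_is_unique_p_polynomial_general {A : Type*} [CommRing A] {p : ℕ}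
    [Fact p.Prime] (hp : (p : A) = 0) {n : ℕ} {F : MvPolynomial (Fin n) A}
    (hF : IsPPolynomial p F) {i : Fin n} {q : ℕ} (hFi : HasUnitLeadingTerm F i q)
    {g : MvPolynomial (Fin n) A}
    (hg : additivityDefect g ∈ Ideal.span {rename Sum.inl F, rename Sum.inr F}) :
    ∃! G : MvPolynomial (Fin n) A,
      IsPPolynomial p G ∧ G.degreeOf i < q ∧ g - G ∈ Ideal.span {F} := by
  simp only [Ideal.mem_span_singleton, isPPolynomial_iff_additivityDefect_eq_zero hp] at hF ⊢
  obtain ⟨G, hgG, hG⟩ := hFi.exists_dvd_sub_degreeOf_lt g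
  refine ⟨G, ⟨?_, hG, hgG⟩, ?_⟩
  · have hmem : additivityDefect G ∈ Ideal.span {rename Sum.inl F, rename Sum.inr F} := by
      simpa using Ideal.sub_mem _ hg (additivityDefect_mem_span_of_dvd hF hgG)
    exact (hFi.rename Sum.inl_injective).eq_zero_of_mem_span_pair (hFi.rename Sum.inr_injective)
      (degreeOf_rename_of_notMem_range (by simp) F) hmem
      ((degreeOf_additivityDefect_le _ G).trans_lt hG)
      ((degreeOf_additivityDefect_le _ G).trans_lt hG)
  · rintro G' ⟨-, hG', hgG'⟩
    have hdvd : F ∣ G' - G := by simpa using dvd_sub hgG hgG'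
    exact sub_eq_zero.mp (hFi.eq_zero_of_dvd_of_degreeOf_lt hdvd
      ((degreeOf_sub_le i G' G).trans_lt (max_lt hG' hG)))

/-- **Homomorphisms from the vanishing locus of a p-polynomial into 𝔾ₐ are given by
unique p-polynomials of bounded degree (affine-coordinate form).**
Let `k` be a field of characteristic `p > 0`, `F ∈ k[X_1,…,X_n]` a `p`-polynomial with
`deg_{X i₀} F = p ^ N₀`, `A` a commutative `k`-algebra and `g ∈ A[X_1,…,X_n]`.  If
`g(X+X') - g(X) - g(X')` lies in the ideal of `A[X_1,…,X_n,X'_1,…,X'_n]` generated by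
`F(X)` and `F(X')` (i.e. `g` defines a group homomorphism `U_A → 𝔾ₐ` on
`U_A = Spec A[X]/(F)`), then there is a unique `p`-polynomial `G ∈ A[X_1,…,X_n]` with
`deg_{X i₀} G < p ^ N₀` and `g - G` in the ideal generated by `F`. -/
theorem hom_from_vanishing_locus_is_unique_p_polynomial {k : Type*} [Field k]
    (p : ℕ) (hp : 0 < p) [CharP k p]
    {n : ℕ} (F : MvPolynomial (Fin n) k) (hF : IsPPolynomial p F)
    (i₀ : Fin n) (N₀ : ℕ) (hdeg : F.degreeOf i₀ = p ^ N₀)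
    (A : Type*) [CommRing A] [Algebra k A]
    (g : MvPolynomial (Fin n) A)
    (hadd : aeval (fun i : Fin n =>
          (X (Sum.inl i) + X (Sum.inr i) : MvPolynomial (Fin n ⊕ Fin n) A)) g
        - rename Sum.inl g - rename Sum.inr g ∈
      Ideal.span {rename Sum.inl (MvPolynomial.map (algebraMap k A) F),
                  rename Sum.inr (MvPolynomial.map (algebraMap k A) F)}) :
    ∃! G : MvPolynomial (Fin n) A,
      IsPPolynomial p G ∧ G.degreeOf i₀ < p ^ N₀ ∧
        g - G ∈ Ideal.span {MvPolynomial.map (algebraMap k A) F} := by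
  have : Fact p.Prime := ⟨(CharP.char_is_prime_or_zero k p).resolve_right hp.ne'⟩
  have hpA : (p : A) = 0 := by rw [← map_natCast (algebraMap k A), CharP.cast_eq_zero, map_zero]
  have hpos : 0 < F.degreeOf i₀ := hdeg ▸ pow_pos hp N₀
  exact hom_from_vanishing_locus_is_unique_p_polynomial_general hpA (hF.map _)
    (hdeg ▸ (hF.hasUnitLeadingTerm hpos (hF.coeff_single_degreeOf_ne_zero hpos).isUnit).map _) hadd
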